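/- Let (T, ρ) be a continuum tree, let x, y ∈ T be distinct with ℓ = ρ(x,y), and let δ, ε > 0 satisfy δ ≤ ℓ, ε ≤ ℓ and δ + ε > ℓ. Let u and w be the unique points of [[x,y]] with ρ(x,u) = ℓ − ε and ρ(x,w) = δ. Then B_δ(x) ∩ B_ε(y) = ⋃_{σ ∈ [[u,w]]} B_{min(ρ(u,σ), ρ(σ,w))}(σ). -/

import Mathlib

/-- A continuum tree: a compact metric space in which, for all `x y`, there is a
unique isometric parametrisation `[0, dist x y] → T` from `x` to `y`, and the image
of every injective continuous path from `x` to `y` equals the image of this geodesic. -/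
structure ContinuumTree (T : Type*) [MetricSpace T] [CompactSpace T] where
  geodesic : T → T → ℝ → T
  geodesic_isometry : ∀ x y : T, ∀ s ∈ Set.Icc (0 : ℝ) (dist x y),
    ∀ t ∈ Set.Icc (0 : ℝ) (dist x y),
      dist (geodesic x y s) (geodesic x y t) = |s - t|
  geodesic_source : ∀ x y : T, geodesic x y 0 = x
  geodesic_target : ∀ x y : T, geodesic x y (dist x y) = y
  geodesic_unique : ∀ x y : T, ∀ γ : ℝ → T,
    (∀ s ∈ Set.Icc (0 : ℝ) (dist x y), ∀ t ∈ Set.Icc (0 : ℝ) (dist x y),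
      dist (γ s) (γ t) = |s - t|) →
    γ 0 = x → γ (dist x y) = y →
    Set.EqOn γ (geodesic x y) (Set.Icc 0 (dist x y))
  path_image : ∀ x y : T, ∀ γ : Path x y, Function.Injective ⇑γ →
    Set.range ⇑γ = geodesic x y '' Set.Icc 0 (dist x y)

/-- The geodesic segment `[[x,y]]`: the image of the unique geodesic from `x` to `y`. -/
def ContinuumTree.seg {T : Type*} [MetricSpace T] [CompactSpace T]
    (ct : ContinuumTree T) (x y : T) : Set T :=
  ct.geodesic x y '' Set.Icc 0 (dist x y)

/-!
A real tree is a metric space with enough arcs in which each arc from `x` to `y` is the metric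
segment `{p | dist x p + dist p y = dist x y}`. When `[x, p]` and `[p, z]` meet only in `p`, they
concatenate to an arc, so that `[x, z] = [x, p] ∪ [p, z]`. This has two consequences.

* Points of `[x, y]` are ordered by their distance to `x`.
* The point `p` of `[x, y]` closest to `z` lies on `[x, z]` and on `[y, z]`.

If `z` lies in both balls, then `dist x p + dist p z < δ` and `dist y p + dist p z < ε` for this
`p`, so `p` lies on `[u, w]` at distance more than `dist p z` from both ends. The other inclusion is
the triangle inequality.
-/

open Function Metric Set

theorem coe_unitInterval_mul_mem_Icc (t : unitInterval) {r : ℝ} (hr : 0 ≤ r) :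
    (t : ℝ) * r ∈ Icc 0 r :=
  ⟨mul_nonneg t.2.1 hr, mul_le_of_le_one_left hr t.2.2⟩

section Path

variable {X : Type*} [TopologicalSpace X] {x p z : X}

theorem injective_path_trans {α : Path x p} {β : Path p z} (hα : Injective α) (hβ : Injective β)
    (h : range α ∩ range β ⊆ {p}) : Injective (α.trans β) := by
  have apply_ne_apply : ∀ s t : unitInterval, 0 < t → α s ≠ β t := by
    intro s t ht hst
    have hp : β t = p := h ⟨⟨s, hst⟩, t, rfl⟩
    exact ht.ne' (hβ (hp.trans β.source.symm))
  intro s t hst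
  rw [Path.trans_apply, Path.trans_apply] at hst
  split_ifs at hst with hs ht ht
  · have := congrArg Subtype.val (hα hst)
    exact Subtype.ext (by linarith)
  · exact absurd hst (apply_ne_apply _ _ (Subtype.mk_lt_mk.2 (by linarith)))
  · exact absurd hst.symm (apply_ne_apply _ _ (Subtype.mk_lt_mk.2 (by linarith)))
  · have := congrArg Subtype.val (hβ hst)
    exact Subtype.ext (by linarith)

end Path

/-- The metric segment `[x, y]`: the points at which the triangle inequality between `x` and `y` is
an equality. It is defined without reference to a geodesic, so it makes sense in any space. -/
def metricSegment {X : Type*} [PseudoMetricSpace X] (x y : X) : Set X :=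
  {p | dist x p + dist p y = dist x y}

section PseudoMetricSpace

variable {X : Type*} [PseudoMetricSpace X] {x y p q u w : X}

theorem mem_metricSegment : p ∈ metricSegment x y ↔ dist x p + dist p y = dist x y :=
  Iff.rfl

theorem left_mem_metricSegment (x y : X) : x ∈ metricSegment x y := by
  simp [mem_metricSegment]

theorem right_mem_metricSegment (x y : X) : y ∈ metricSegment x y := by
  simp [mem_metricSegment]

theorem metricSegment_comm (x y : X) : metricSegment x y = metricSegment y x := by
  ext p
  rw [mem_metricSegment, mem_metricSegment, dist_comm x p, dist_comm p y, dist_comm x y, add_comm]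

theorem metricSegment_subset_of_right_mem (hp : p ∈ metricSegment x y) :
    metricSegment x p ⊆ metricSegment x y := by
  intro q hq
  rw [mem_metricSegment] at hp hq ⊢
  linarith [dist_triangle x q y, dist_triangle q p y]

theorem metricSegment_subset_of_left_mem (hp : p ∈ metricSegment x y) :
    metricSegment p y ⊆ metricSegment x y := by
  rw [metricSegment_comm] at hp
  rw [metricSegment_comm p, metricSegment_comm x]
  exact metricSegment_subset_of_right_mem hp

theorem mem_metricSegment_of_mem_of_mem (hp : p ∈ metricSegment x y)
    (hq : q ∈ metricSegment x p) : p ∈ metricSegment q y := by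
  rw [mem_metricSegment] at hp hq ⊢
  linarith [dist_triangle x q y, dist_triangle q p y]

theorem ball_subset_ball_of_mem_metricSegment (hp : p ∈ metricSegment x y) :
    ball p (dist p y) ⊆ ball x (dist x y) := by
  apply ball_subset_ball'
  rw [← mem_metricSegment.1 hp, dist_comm p x, add_comm]

theorem iUnion_ball_subset_ball_inter_ball (hu : u ∈ metricSegment x w)
    (hw : w ∈ metricSegment x y) :
    ⋃ σ ∈ metricSegment u w, ball σ (min (dist u σ) (dist σ w)) ⊆
      ball x (dist x w) ∩ ball y (dist u y) := by
  refine iUnion₂_subset fun σ hσ => subset_inter ?_ ?_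
  · have hσx : σ ∈ metricSegment x w := metricSegment_subset_of_left_mem hu hσ
    exact (ball_subset_ball (min_le_right _ _)).trans (ball_subset_ball_of_mem_metricSegment hσx)
  · have hσy : σ ∈ metricSegment y u := by
      rw [metricSegment_comm]
      exact metricSegment_subset_of_right_mem (mem_metricSegment_of_mem_of_mem hw hu) hσ
    rw [dist_comm u σ, dist_comm u y]
    exact (ball_subset_ball (min_le_left _ _)).trans (ball_subset_ball_of_mem_metricSegment hσy)

end PseudoMetricSpace

section MetricSpace

variable {X : Type*} [MetricSpace X] {x y p : X}

theorem metricSegment_self (x : X) : metricSegment x x = {x} := by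
  ext p
  rw [mem_metricSegment, dist_comm p x, dist_self, add_self_eq_zero, dist_eq_zero,
    mem_singleton_iff, eq_comm]

theorem metricSegment_inter_subset_singleton (hp : p ∈ metricSegment x y) :
    metricSegment x p ∩ metricSegment p y ⊆ {p} := by
  rintro q ⟨hqx, hqy⟩
  have hpq : p ∈ metricSegment q y := mem_metricSegment_of_mem_of_mem hp hqx
  rw [mem_metricSegment] at hqy hpq
  exact dist_le_zero.1 (by linarith [dist_comm p q])

end MetricSpace

/-- A real tree: a metric space in which distinct points are joined by an arc (an injective path),
and every arc from `x` to `y` has the metric segment `[x, y]` as its image. Applied to subarcs, the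
second condition makes every arc a geodesic up to reparametrisation, so no
parametrisation by arc length is required. -/
structure IsRealTree (X : Type*) [MetricSpace X] : Prop where
  exists_injective_path : ∀ x y : X, x ≠ y → ∃ γ : Path x y, Injective γ
  range_path : ∀ (x y : X) (γ : Path x y), Injective γ → range γ = metricSegment x y

namespace IsRealTree

variable {X : Type*} [MetricSpace X] {x y z p q u w : X}

theorem isCompact_metricSegment (hX : IsRealTree X) (x y : X) :
    IsCompact (metricSegment x y) := by
  rcases eq_or_ne x y with rfl | hxy
  · rw [metricSegment_self]
    exact isCompact_singleton
  · obtain ⟨γ, hγ⟩ := hX.exists_injective_path x y hxy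
    rw [← hX.range_path x y γ hγ]
    exact isCompact_range γ.continuous

theorem metricSegment_eq_union (hX : IsRealTree X)
    (h : metricSegment x p ∩ metricSegment p z ⊆ {p}) :
    metricSegment x z = metricSegment x p ∪ metricSegment p z := by
  rcases eq_or_ne x p with rfl | hxp
  · rw [metricSegment_self, singleton_union, insert_eq_of_mem (left_mem_metricSegment x z)]
  rcases eq_or_ne p z with rfl | hpz
  · rw [metricSegment_self, union_singleton, insert_eq_of_mem (right_mem_metricSegment x p)]
  obtain ⟨α, hα⟩ := hX.exists_injective_path x p hxp
  obtain ⟨β, hβ⟩ := hX.exists_injective_path p z hpz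
  rw [← hX.range_path x p α hα, ← hX.range_path p z β hβ] at h ⊢
  rw [← hX.range_path x z _ (injective_path_trans hα hβ h), Path.trans_range]

theorem mem_metricSegment_of_inter_subset (hX : IsRealTree X)
    (h : metricSegment x p ∩ metricSegment p z ⊆ {p}) : p ∈ metricSegment x z := by
  rw [hX.metricSegment_eq_union h]
  exact Or.inl (right_mem_metricSegment x p)

theorem mem_metricSegment_of_dist_le (hX : IsRealTree X) (hp : p ∈ metricSegment x y)
    (hq : q ∈ metricSegment x y) (hpq : dist x p ≤ dist x q) : p ∈ metricSegment x q := by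
  have hp' := hp
  rw [hX.metricSegment_eq_union (metricSegment_inter_subset_singleton hq)] at hp'
  rcases hp' with hp_left | hp_right
  · exact hp_left
  · have hqp : q ∈ metricSegment x p := by
      rw [metricSegment_comm] at hp_right hq ⊢
      exact mem_metricSegment_of_mem_of_mem hq hp_right
    rw [mem_metricSegment] at hqp
    obtain rfl : q = p := dist_le_zero.1 (by linarith)
    exact right_mem_metricSegment x q

theorem mem_metricSegment_of_isMinOn (hX : IsRealTree X) (hp : p ∈ metricSegment x y)
    (hmin : IsMinOn (dist · z) (metricSegment x y) p) : p ∈ metricSegment x z := by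
  apply hX.mem_metricSegment_of_inter_subset
  rintro q ⟨hqx, hqz⟩
  have hpq : dist p z ≤ dist q z := hmin (metricSegment_subset_of_right_mem hp hqx)
  rw [mem_metricSegment] at hqz
  exact (dist_le_zero.1 (by linarith)).symm

theorem exists_median (hX : IsRealTree X) (x y z : X) :
    ∃ p, p ∈ metricSegment x y ∧ p ∈ metricSegment x z ∧ p ∈ metricSegment y z := by
  obtain ⟨p, hp, hmin⟩ := (hX.isCompact_metricSegment x y).exists_isMinOn
    ⟨x, left_mem_metricSegment x y⟩ (f := (dist · z)) (by fun_prop)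
  refine ⟨p, hp, hX.mem_metricSegment_of_isMinOn hp hmin, ?_⟩
  rw [metricSegment_comm] at hp hmin
  exact hX.mem_metricSegment_of_isMinOn hp hmin

theorem ball_inter_ball_subset_iUnion (hX : IsRealTree X) (hu : u ∈ metricSegment x y)
    (hw : w ∈ metricSegment x y) :
    ball x (dist x w) ∩ ball y (dist u y) ⊆
      ⋃ σ ∈ metricSegment u w, ball σ (min (dist u σ) (dist σ w)) := by
  rintro z ⟨hzx, hzy⟩
  rw [mem_ball'] at hzx hzy
  obtain ⟨p, hp, hpx, hpy⟩ := hX.exists_median x y z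
  have hpz : 0 ≤ dist p z := dist_nonneg
  rw [mem_metricSegment] at hpx hpy
  have hpw : p ∈ metricSegment x w := hX.mem_metricSegment_of_dist_le hp hw (by linarith)
  have hup : u ∈ metricSegment x p := by
    apply hX.mem_metricSegment_of_dist_le hu hp
    rw [mem_metricSegment] at hu hp
    linarith [dist_comm p y]
  have hpuw : p ∈ metricSegment u w := mem_metricSegment_of_mem_of_mem hpw hup
  refine mem_biUnion hpuw (mem_ball'.2 (lt_min ?_ ?_))
  · rw [mem_metricSegment] at hu hp hup
    linarith [dist_comm p y]
  · rw [mem_metricSegment] at hpw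
    linarith

end IsRealTree

namespace ContinuumTree

variable {T : Type*} [MetricSpace T] [CompactSpace T] {x y : T}

theorem continuousOn_geodesic (ct : ContinuumTree T) (x y : T) :
    ContinuousOn (ct.geodesic x y) (Icc 0 (dist x y)) := by
  have hlip : LipschitzOnWith 1 (ct.geodesic x y) (Icc 0 (dist x y)) :=
    .of_dist_le_mul fun s hs t ht => by
      rw [ct.geodesic_isometry x y s hs t ht, NNReal.coe_one, one_mul, Real.dist_eq]
  exact hlip.continuousOn

theorem injOn_geodesic (ct : ContinuumTree T) (x y : T) :
    InjOn (ct.geodesic x y) (Icc 0 (dist x y)) := by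
  intro s hs t ht hst
  rw [← dist_eq_zero, ct.geodesic_isometry x y s hs t ht] at hst
  exact sub_eq_zero.1 (abs_eq_zero.1 hst)

/-- The geodesic from `x` to `y`, rescaled to the unit interval so that it is a `Path`. -/
def geodesicPath (ct : ContinuumTree T) (x y : T) : Path x y where
  toFun t := ct.geodesic x y (t * dist x y)
  continuous_toFun := (ct.continuousOn_geodesic x y).comp_continuous (by fun_prop)
    (coe_unitInterval_mul_mem_Icc · dist_nonneg)
  source' := by simp [ct.geodesic_source]
  target' := by simp [ct.geodesic_target]

theorem geodesicPath_apply (ct : ContinuumTree T) (x y : T) (t : unitInterval) :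
    ct.geodesicPath x y t = ct.geodesic x y (t * dist x y) :=
  rfl

theorem geodesicPath_injective (ct : ContinuumTree T) (hxy : x ≠ y) :
    Injective (ct.geodesicPath x y) := by
  intro s t hst
  rw [geodesicPath_apply, geodesicPath_apply] at hst
  have hmul := ct.injOn_geodesic x y (coe_unitInterval_mul_mem_Icc s dist_nonneg)
    (coe_unitInterval_mul_mem_Icc t dist_nonneg) hst
  exact Subtype.ext (mul_right_cancel₀ (dist_ne_zero.2 hxy) hmul)

theorem range_path_eq_seg (ct : ContinuumTree T) {γ : Path x y} (hγ : Injective γ) :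
    range γ = ct.seg x y :=
  ct.path_image x y γ hγ

theorem seg_subset_metricSegment (ct : ContinuumTree T) (x y : T) :
    ct.seg x y ⊆ metricSegment x y := by
  rintro _ ⟨t, ht, rfl⟩
  have hsource := ct.geodesic_isometry x y 0 (left_mem_Icc.2 dist_nonneg) t ht
  have htarget := ct.geodesic_isometry x y t ht (dist x y) (right_mem_Icc.2 dist_nonneg)
  rw [ct.geodesic_source, zero_sub, abs_neg, abs_of_nonneg ht.1] at hsource
  rw [ct.geodesic_target, abs_sub_comm, abs_of_nonneg (sub_nonneg.2 ht.2)] at htarget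
  rw [mem_metricSegment, hsource, htarget, add_sub_cancel]

theorem left_mem_seg (ct : ContinuumTree T) (x y : T) : x ∈ ct.seg x y :=
  ⟨0, left_mem_Icc.2 dist_nonneg, ct.geodesic_source x y⟩

theorem right_mem_seg (ct : ContinuumTree T) (x y : T) : y ∈ ct.seg x y :=
  ⟨dist x y, right_mem_Icc.2 dist_nonneg, ct.geodesic_target x y⟩

theorem seg_eq_metricSegment (ct : ContinuumTree T) (x y : T) :
    ct.seg x y = metricSegment x y := by
  refine (ct.seg_subset_metricSegment x y).antisymm fun p hp => ?_
  rcases eq_or_ne x p with rfl | hxp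
  · exact ct.left_mem_seg x y
  rcases eq_or_ne p y with rfl | hpy
  · exact ct.right_mem_seg x p
  have hα := ct.geodesicPath_injective hxp
  have hβ := ct.geodesicPath_injective hpy
  have hinter : range (ct.geodesicPath x p) ∩ range (ct.geodesicPath p y) ⊆ {p} := by
    rw [ct.range_path_eq_seg hα, ct.range_path_eq_seg hβ]
    exact (inter_subset_inter (ct.seg_subset_metricSegment x p)
      (ct.seg_subset_metricSegment p y)).trans (metricSegment_inter_subset_singleton hp)
  rw [← ct.range_path_eq_seg (injective_path_trans hα hβ hinter), Path.trans_range]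
  exact Or.inl ⟨1, Path.target _⟩

theorem isRealTree (ct : ContinuumTree T) : IsRealTree T where
  exists_injective_path x y hxy := ⟨ct.geodesicPath x y, ct.geodesicPath_injective hxy⟩
  range_path x y _ hγ := (ct.range_path_eq_seg hγ).trans (ct.seg_eq_metricSegment x y)

end ContinuumTree

theorem stmt_5_general {X : Type*} [MetricSpace X] (hX : IsRealTree X) {x y : X} {δ ε : ℝ}
    (hsum : dist x y ≤ δ + ε) {u w : X} (hu : u ∈ metricSegment x y)
    (hud : dist x u = dist x y - ε) (hw : w ∈ metricSegment x y) (hwd : dist x w = δ) :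
    ball x δ ∩ ball y ε = ⋃ σ ∈ metricSegment u w, ball σ (min (dist u σ) (dist σ w)) := by
  have hux : u ∈ metricSegment x w := hX.mem_metricSegment_of_dist_le hu hw (by linarith)
  obtain rfl : ε = dist u y := by linarith [mem_metricSegment.1 hu]
  subst hwd
  exact (hX.ball_inter_ball_subset_iUnion hu hw).antisymm
    (iUnion_ball_subset_ball_inter_ball hux hw)

/-- The intersection of two overlapping balls in a continuum tree is the union of the balls
`B_{min(ρ(u,σ), ρ(σ,w))}(σ)` over `σ ∈ [[u,w]]`. -/
theorem stmt_5 {T : Type*} [MetricSpace T] [CompactSpace T] (ct : ContinuumTree T)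
    {x y : T} (hxy : x ≠ y) {δ ε : ℝ} (hδ0 : 0 < δ) (hε0 : 0 < ε)
    (hδℓ : δ ≤ dist x y) (hεℓ : ε ≤ dist x y) (hsum : dist x y < δ + ε)
    {u w : T} (hu : u ∈ ct.seg x y) (hud : dist x u = dist x y - ε)
    (hw : w ∈ ct.seg x y) (hwd : dist x w = δ) :
    Metric.ball x δ ∩ Metric.ball y ε =
      ⋃ σ ∈ ct.seg u w, Metric.ball σ (min (dist u σ) (dist σ w)) := by
  rw [ct.seg_eq_metricSegment] at hu hw ⊢
  exact stmt_5_general ct.isRealTree hsum.le hu hud hw hwd
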